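/- In the root system of type C_ℓ, for 1 ≤ j ≤ ℓ−1 one has σ_ℓσ_{ℓ−1}⋯σ_1(λ_j) = λ_{j−1} + λ_{ℓ−1} − λ_ℓ (with λ_0 = 0), and σ_ℓσ_{ℓ−1}⋯σ_1(λ_ℓ) = 2λ_{ℓ−1} − λ_ℓ. -/

import Mathlib

/-- The fundamental weight `λ_j` (1-indexed), written in the fundamental weight basis
of the weight lattice `Fin ℓ → ℤ`.  By convention `λ_j = 0` when `j = 0` or `j > ℓ`. -/
def lam (ℓ : ℕ) (j : ℕ) : Fin ℓ → ℤ :=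
  if h : 1 ≤ j ∧ j ≤ ℓ then Pi.single (⟨j - 1, by omega⟩ : Fin ℓ) 1 else 0

/-- The simple root `α_i` (1-indexed) determined by the Cartan matrix `C`
via `α_i = ∑_j C i j • λ_j`. -/
def rootOf (ℓ : ℕ) (C : ℕ → ℕ → ℤ) (i : ℕ) : Fin ℓ → ℤ :=
  fun k => C i (k.1 + 1)

/-- The simple reflection `σ_i = σ_{α_i}`.  Since the fundamental weights are dual to the
simple coroots, `⟨μ, α_i^∨⟩` is the `i`-th coordinate of `μ` in the fundamental weight
basis, and `σ_i μ = μ - ⟨μ, α_i^∨⟩ α_i`. -/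
def sref (ℓ : ℕ) (C : ℕ → ℕ → ℤ) (i : ℕ) (μ : Fin ℓ → ℤ) : Fin ℓ → ℤ :=
  if h : 1 ≤ i ∧ i ≤ ℓ then μ - μ ⟨i - 1, by omega⟩ • rootOf ℓ C i else μ

/-- The Weyl group element `σ_{i₁} σ_{i₂} ⋯ σ_{iₖ}` (applied to `μ`), for a word
`[i₁, i₂, …, iₖ]` in the simple reflections. -/
def word (ℓ : ℕ) (C : ℕ → ℕ → ℤ) (l : List ℕ) (μ : Fin ℓ → ℤ) : Fin ℓ → ℤ :=
  l.foldr (sref ℓ C) μ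

/-- The Cartan matrix of type `C_ℓ` (with `α_ℓ` long):
`α_i = -λ_{i-1} + 2λ_i - λ_{i+1}` for `i < ℓ` and `α_ℓ = -2λ_{ℓ-1} + 2λ_ℓ`. -/
def cartanC (ℓ : ℕ) : ℕ → ℕ → ℤ := fun i j =>
  if i = j then 2
  else if i + 1 = j then -1
  else if j + 1 = i then (if i = ℓ then -2 else -1)
  else 0

/-- The word `(σ_ℓ σ_{ℓ-1} ⋯ σ_1)(σ_ℓ σ_{ℓ-1} ⋯ σ_2) ⋯ (σ_ℓ σ_{ℓ-1})(σ_ℓ)`. -/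
def wordC (ℓ : ℕ) : List ℕ :=
  (List.range ℓ).flatMap (fun k => (List.range (ℓ - k)).map (fun t => ℓ - t))

/-!
For `1 ≤ j ≤ m + 1 ≤ ℓ` the partial product `σ_m ⋯ σ_1` sends `λ_j` to `λ_{j-1} - λ_m + λ_{m+1}`.
Indeed `σ_1, …, σ_{j-1}` fix `λ_j`, and from then on each `σ_{m+1}` moves only the last summand,
replacing it by `λ_{m+1} - α_{m+1}`: the sum telescopes as long as
`α_{m+1} = -λ_m + 2λ_{m+1} - λ_{m+2}`. The long root `α_ℓ = -2λ_{ℓ-1} + 2λ_ℓ` enters only in the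
last step, and the value `λ_{j-1} + λ_{ℓ-1} - λ_ℓ` it produces is `2λ_{ℓ-1} - λ_ℓ` when `j = ℓ`.
-/

section Reflections

variable {ℓ : ℕ} {C : ℕ → ℕ → ℤ}

lemma lam_apply (j : ℕ) (k : Fin ℓ) : lam ℓ j k = if k.1 + 1 = j then 1 else 0 := by
  by_cases hj : 1 ≤ j ∧ j ≤ ℓ
  · rw [lam, dif_pos hj, Pi.single_apply]
    exact if_congr (by rw [Fin.ext_iff]; dsimp only; omega) rfl rfl
  · rw [lam, dif_neg hj, if_neg (by omega), Pi.zero_apply]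

lemma sref_add (i : ℕ) (μ ν : Fin ℓ → ℤ) :
    sref ℓ C i (μ + ν) = sref ℓ C i μ + sref ℓ C i ν := by
  unfold sref
  split_ifs
  · rw [Pi.add_apply, add_smul, add_sub_add_comm]
  · rfl

lemma sref_sub (i : ℕ) (μ ν : Fin ℓ → ℤ) :
    sref ℓ C i (μ - ν) = sref ℓ C i μ - sref ℓ C i ν := by
  unfold sref
  split_ifs
  · rw [Pi.sub_apply, sub_smul, sub_sub_sub_comm]
  · rfl

lemma sref_lam_of_ne {i j : ℕ} (hij : i ≠ j) : sref ℓ C i (lam ℓ j) = lam ℓ j := by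
  unfold sref
  split_ifs
  · rw [lam_apply, if_neg (by dsimp only; omega), zero_smul, sub_zero]
  · rfl

lemma sref_lam_self {i : ℕ} (hi : 1 ≤ i) (hiℓ : i ≤ ℓ) :
    sref ℓ C i (lam ℓ i) = lam ℓ i - rootOf ℓ C i := by
  rw [sref, dif_pos ⟨hi, hiℓ⟩, lam_apply, if_pos (Nat.sub_add_cancel hi), one_smul]

lemma word_cons (i : ℕ) (l : List ℕ) (μ : Fin ℓ → ℤ) :
    word ℓ C (i :: l) μ = sref ℓ C i (word ℓ C l μ) :=
  rfl

lemma word_lam_of_notMem {l : List ℕ} {j : ℕ} (hj : j ∉ l) :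
    word ℓ C l (lam ℓ j) = lam ℓ j := by
  induction l with
  | nil => rfl
  | cons i l ih =>
    obtain ⟨hji, hjl⟩ := List.ne_and_not_mem_of_not_mem_cons hj
    rw [word_cons, ih hjl, sref_lam_of_ne hji.symm]

end Reflections

/-- The word `[m, m - 1, …, 1]`, whose Weyl group element is `σ_m σ_{m-1} ⋯ σ_1`. For `m = ℓ` it is
the word of the theorem; smaller `m` give the partial products met in the induction. -/
def descendingWord (m : ℕ) : List ℕ :=
  (List.range m).map fun t => m - t

lemma descendingWord_succ (m : ℕ) : descendingWord (m + 1) = (m + 1) :: descendingWord m := by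
  simp [descendingWord, List.range_succ_eq_map, Function.comp_def]

lemma notMem_descendingWord_of_lt {m j : ℕ} (hj : m < j) : j ∉ descendingWord m := by
  simp only [descendingWord, List.mem_map, not_exists]
  omega

section DescendingProducts

variable {ℓ : ℕ} {C : ℕ → ℕ → ℤ}

lemma word_descendingWord_succ (m : ℕ) (μ : Fin ℓ → ℤ) :
    word ℓ C (descendingWord (m + 1)) μ
      = sref ℓ C (m + 1) (word ℓ C (descendingWord m) μ) := by
  rw [descendingWord_succ, word_cons]

lemma sref_succ_lam_sub_lam_add_lam_succ {k m : ℕ} (hkm : k ≤ m) (hm : m < ℓ) :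
    sref ℓ C (m + 1) (lam ℓ k - lam ℓ m + lam ℓ (m + 1))
      = lam ℓ k - lam ℓ m + (lam ℓ (m + 1) - rootOf ℓ C (m + 1)) := by
  rw [sref_add, sref_sub, sref_lam_of_ne (by omega), sref_lam_of_ne (by omega),
    sref_lam_self (by omega) hm]

theorem word_descendingWord_lam_succ {k m : ℕ} (hkm : k ≤ m) (hm : m ≤ ℓ)
    (hroot : ∀ i < m,
      rootOf ℓ C (i + 1) = -lam ℓ i + 2 • lam ℓ (i + 1) - lam ℓ (i + 2)) :
    word ℓ C (descendingWord m) (lam ℓ (k + 1)) = lam ℓ k - lam ℓ m + lam ℓ (m + 1) := by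
  induction m, hkm using Nat.le_induction with
  | base => rw [word_lam_of_notMem (notMem_descendingWord_of_lt k.lt_succ_self), sub_self, zero_add]
  | succ m hkm ih =>
    have ih := ih (by omega) fun i hi => hroot i (by omega)
    rw [word_descendingWord_succ, ih, sref_succ_lam_sub_lam_add_lam_succ hkm hm,
      hroot m m.lt_succ_self]
    module

end DescendingProducts

lemma rootOf_cartanC_succ_of_lt {ℓ i : ℕ} (hi : i + 1 < ℓ) :
    rootOf ℓ (cartanC ℓ) (i + 1) = -lam ℓ i + 2 • lam ℓ (i + 1) - lam ℓ (i + 2) := by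
  ext k
  simp only [rootOf, cartanC, Pi.add_apply, Pi.sub_apply, Pi.neg_apply, Pi.smul_apply, lam_apply]
  grind

lemma rootOf_cartanC_last (m : ℕ) :
    rootOf (m + 1) (cartanC (m + 1)) (m + 1) = -(2 • lam (m + 1) m) + 2 • lam (m + 1) (m + 1) := by
  ext k
  simp only [rootOf, cartanC, Pi.add_apply, Pi.neg_apply, Pi.smul_apply, lam_apply]
  grind

theorem word_descendingWord_cartanC_lam_succ {k m : ℕ} (hkm : k ≤ m) :
    word (m + 1) (cartanC (m + 1)) (descendingWord (m + 1)) (lam (m + 1) (k + 1))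
      = lam (m + 1) k + lam (m + 1) m - lam (m + 1) (m + 1) := by
  have hpartial := word_descendingWord_lam_succ hkm m.le_succ fun i hi =>
    rootOf_cartanC_succ_of_lt (ℓ := m + 1) (Nat.succ_lt_succ hi)
  rw [word_descendingWord_succ, hpartial,
    sref_succ_lam_sub_lam_add_lam_succ hkm m.lt_succ_self, rootOf_cartanC_last]
  module

/-- In type `C_ℓ`, the element `σ_ℓ σ_{ℓ-1} ⋯ σ_1` satisfies
`σ_ℓ ⋯ σ_1 (λ_j) = λ_{j-1} + λ_{ℓ-1} - λ_ℓ` for `1 ≤ j ≤ ℓ-1` (with `λ_0 = 0`),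
and `σ_ℓ ⋯ σ_1 (λ_ℓ) = 2λ_{ℓ-1} - λ_ℓ`. -/
theorem typeC_descending_on_fundamental_weights (ℓ : ℕ) (hℓ : 2 ≤ ℓ) :
    (∀ j, 1 ≤ j → j ≤ ℓ - 1 →
      word ℓ (cartanC ℓ) ((List.range ℓ).map (fun t => ℓ - t)) (lam ℓ j)
        = lam ℓ (j - 1) + lam ℓ (ℓ - 1) - lam ℓ ℓ) ∧
    word ℓ (cartanC ℓ) ((List.range ℓ).map (fun t => ℓ - t)) (lam ℓ ℓ)
      = 2 • lam ℓ (ℓ - 1) - lam ℓ ℓ := by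
  obtain ⟨m, rfl⟩ := Nat.exists_eq_add_of_le' (one_le_two.trans hℓ)
  refine ⟨fun j hj hjm => ?_, ?_⟩
  · obtain ⟨k, rfl⟩ := Nat.exists_eq_add_of_le' hj
    exact word_descendingWord_cartanC_lam_succ (by omega)
  · rw [two_nsmul]
    exact word_descendingWord_cartanC_lam_succ le_rfl
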